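/- Let λ be an r-partition of n and c an integer. If λ has weight c with respect to the parameters (q, Q₁, Q₂, …, Q_r), then the conjugate r-partition λ' has weight c with respect to the parameters (q^{−1}, Q_r, Q_{r−1}, …, Q₁). Equivalently, the weight of λ' computed with q replaced by q^{−1} and the cyclotomic parameters reversed equals the weight of λ. -/

import Mathlib

open scoped BigOperators

/-- `lam : ℕ → ℕ` encodes a partition: row `i` (0-indexed) has `lam i` boxes.
It must be non-increasing with finitely many nonzero parts. -/
def IsPartitionFun (lam : ℕ → ℕ) : Prop :=
  (∀ ⦃i j : ℕ⦄, i ≤ j → lam j ≤ lam i) ∧ ∃ N : ℕ, ∀ i, N ≤ i → lam i = 0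

/-- The size `|λ|` of a partition. -/
noncomputable def partSize (lam : ℕ → ℕ) : ℕ := ∑ᶠ i, lam i

/-- The conjugate partition: `(conjParts lam) j = #{i : lam i ≥ j+1}`
(column `j`, 0-indexed, has as many boxes as there are rows of length `> j`). -/
noncomputable def conjParts (lam : ℕ → ℕ) : ℕ → ℕ :=
  fun j => Set.ncard {i : ℕ | j < lam i}

/-- An `r`-partition (multipartition) is an `r`-tuple of partitions. -/
def IsMultipartition {r : ℕ} (lam : Fin r → ℕ → ℕ) : Prop :=
  ∀ k, IsPartitionFun (lam k)

/-- The size of an `r`-partition. -/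
noncomputable def msize {r : ℕ} (lam : Fin r → ℕ → ℕ) : ℕ :=
  ∑ k : Fin r, partSize (lam k)

/-- The conjugate of an `r`-partition `λ = (λ⁽¹⁾, …, λ⁽ʳ⁾)` is
`λ' = (λ⁽ʳ⁾', …, λ⁽¹⁾')`. -/
noncomputable def mconj {r : ℕ} (lam : Fin r → ℕ → ℕ) : Fin r → ℕ → ℕ :=
  fun k => conjParts (lam k.rev)

/-- Dominance order on `r`-partitions:
`λ ⊵ μ` iff for every component `s` and every `j ≥ 1`,
`Σ_{t<s} |λ⁽ᵗ⁾| + Σ_{i=1}^{j} λ⁽ˢ⁾ᵢ ≥ Σ_{t<s} |μ⁽ᵗ⁾| + Σ_{i=1}^{j} μ⁽ˢ⁾ᵢ`. -/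
def mDominates {r : ℕ} (lam mu : Fin r → ℕ → ℕ) : Prop :=
  ∀ (s : Fin r) (j : ℕ),
    ((∑ t ∈ Finset.univ.filter (fun t : Fin r => t < s), partSize (mu t)) +
      ∑ i ∈ Finset.range (j + 1), mu s i) ≤
    ((∑ t ∈ Finset.univ.filter (fun t : Fin r => t < s), partSize (lam t)) +
      ∑ i ∈ Finset.range (j + 1), lam s i)

/-- The Young diagram of an `r`-partition: nodes `(i, j, k)` (all 0-indexed)
with `j < λ⁽ᵏ⁾ᵢ`. -/
def mDiagram {r : ℕ} (lam : Fin r → ℕ → ℕ) : Set (ℕ × ℕ × Fin r) :=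
  {x | x.2.1 < lam x.2.2 x.1}

/-- The residue of the node `(i, j, k)` with respect to `(q, Q)` is
`q^(j-i) * Q k` (0-indexed `i, j`, which gives the same value as 1-indexing). -/
noncomputable def res {r : ℕ} {K : Type*} [Field K] (q : K) (Q : Fin r → K)
    (x : ℕ × ℕ × Fin r) : K :=
  q ^ ((x.2.1 : ℤ) - (x.1 : ℤ)) * Q x.2.2

/-- `resCount q Q lam f = c_f(λ)`, the number of nodes of `[λ]` of residue `f`. -/
noncomputable def resCount {r : ℕ} {K : Type*} [Field K] (q : K) (Q : Fin r → K)
    (lam : Fin r → ℕ → ℕ) (f : K) : ℕ :=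
  Set.ncard {x ∈ mDiagram lam | res q Q x = f}

/-- Fayers' weight of an `r`-partition:
`w(λ) = (Σ_{k} c_{Q_k}(λ)) - (1/2) Σ_{f ∈ K^×} (c_f(λ) - c_{qf}(λ))²`. -/
noncomputable def mweight {r : ℕ} {K : Type*} [Field K] (q : K) (Q : Fin r → K)
    (lam : Fin r → ℕ → ℕ) : ℚ :=
  (∑ k : Fin r, (resCount q Q lam (Q k) : ℚ)) -
    (1 / 2) * ∑ᶠ f ∈ {f : K | f ≠ 0},
      (((resCount q Q lam f : ℤ) - (resCount q Q lam (q * f) : ℤ)) : ℚ) ^ 2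

theorem lt_conjParts_iff (lam : ℕ → ℕ) (h : IsPartitionFun lam) (i j : ℕ) :
    i < conjParts lam j ↔ j < lam i := by
  obtain ⟨hm, N, hN⟩ := h
  have hex : ∃ m, lam m ≤ j := ⟨N, by rw [hN N le_rfl]; exact Nat.zero_le _⟩
  classical
  have hs : {i : ℕ | j < lam i} = ((Finset.range (Nat.find hex) : Finset ℕ) : Set ℕ) := by
    ext m
    simp only [Set.mem_setOf_eq, Finset.coe_range, Set.mem_Iio]
    constructor
    · intro hj
      by_contra hlt
      have h1 := hm (not_lt.mp hlt)
      have h2 := Nat.find_spec hex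
      omega
    · intro hlt
      have := Nat.find_min hex hlt
      omega
  have hmem : j < lam i ↔ i ∈ {i : ℕ | j < lam i} := Iff.rfl
  rw [hmem]
  unfold conjParts
  rw [hs, Set.ncard_coe_finset]
  simp

theorem resCount_mconj {K : Type*} [Field K] (q : K) {r : ℕ} (Q : Fin r → K)
    (lam : Fin r → ℕ → ℕ) (hlam : IsMultipartition lam) (f : K) :
    resCount q⁻¹ (fun k => Q k.rev) (mconj lam) f = resCount q Q lam f := by
  unfold resCount
  refine Set.ncard_congr (fun x _ => (x.2.1, x.1, x.2.2.rev)) ?_ ?_ ?_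
  · rintro ⟨i, j, k⟩ ⟨h1, h2⟩
    refine ⟨(lt_conjParts_iff _ (hlam _) _ _).1 h1, ?_⟩
    rw [← h2]
    simp only [res, inv_zpow', neg_sub]
  · rintro ⟨i, j, k⟩ ⟨i', j', k'⟩ _ _ h
    simp only [Prod.mk.injEq, Fin.rev_inj] at h ⊢
    tauto
  · rintro ⟨i, j, k⟩ ⟨h1, h2⟩
    refine ⟨(j, i, k.rev), ⟨?_, ?_⟩, by simp⟩
    · simp only [mDiagram, mconj, Set.mem_setOf_eq, Fin.rev_rev] at h1 ⊢
      exact (lt_conjParts_iff _ (hlam _) _ _).2 h1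
    · rw [← h2]
      simp only [res, inv_zpow', neg_sub, Fin.rev_rev]

/-- If `λ` has weight `c` w.r.t. `(q, Q₁, …, Q_r)`, then `λ'` has
weight `c` w.r.t. `(q⁻¹, Q_r, …, Q₁)`. -/
theorem weight_conj_inv_params {K : Type*} [Field K] (q : K) (hq0 : q ≠ 0) (hq1 : q ≠ 1)
    {r : ℕ} (hr : 2 ≤ r) (a : Fin r → ℤ) (Q : Fin r → K) (hQ : ∀ k, Q k = q ^ a k)
    {n : ℕ} (lam : Fin r → ℕ → ℕ) (hlam : IsMultipartition lam) (hn : msize lam = n)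
    (c : ℤ) (hc : mweight q Q lam = (c : ℚ)) :
    mweight q⁻¹ (fun k => Q k.rev) (mconj lam) = (c : ℚ) := by
  rw [← hc]
  unfold mweight
  simp only [resCount_mconj q Q lam hlam]
  congr 1
  · exact Equiv.sum_comp Fin.revPerm (fun k => (resCount q Q lam (Q k) : ℚ))
  · congr 1
    symm
    refine finsum_mem_eq_of_bijOn (fun f => q * f) ⟨?_, ?_, ?_⟩ ?_
    · intro f hf
      exact mul_ne_zero hq0 hf
    · intro f _ g _ h
      exact mul_left_cancel₀ hq0 h
    · intro f hf
      exact ⟨q⁻¹ * f, mul_ne_zero (inv_ne_zero hq0) hf, by simp [hq0]⟩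
    · intro f _
      simp only [inv_mul_cancel_left₀ hq0]
      ring
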